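/- There exists a closed, diagonally magic knight's tour of the 4×4×4 cube: a closed magic knight's tour in which, in addition to the 48 axis-parallel lines, each of the four space diagonals of the cube has labels summing to 130. -/

import Mathlib

/-!
The proof exhibits a tour and verifies it. The example has two structural features.
The half-turn `(x, y, z) ↦ (3 - x, 3 - y, z)` carries the cell labelled `n` to the cell labelled
`n ± 32`, so the path is a 32-cell path through one cell of each orbit followed by its image.
Moreover, writing `n - 1` with six binary digits, each digit equals 1 on exactly two of the four
cells of every axis-parallel line and every space diagonal; hence the labels on each of these sum
to `2 * (1 + 2 + 4 + 8 + 16 + 32) + 4 = 130`. The remaining verification is a finite computation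
on the two explicit tables `magicLabel` and `magicPath`, which are mutually inverse.
-/

/-- A cell of the 4×4×4 cube: a triple of coordinates in {0,1,2,3}. -/
abbrev Cell : Type := Fin 3 → Fin 4

/-- Two cells are joined by a 3-dimensional knight's move when the absolute
coordinate differences are 1 and 2 in two coordinates and 0 in the third. -/
def KnightMove (p q : Cell) : Prop :=
  ({|(p 0 : ℤ) - (q 0 : ℤ)|, |(p 1 : ℤ) - (q 1 : ℤ)|, |(p 2 : ℤ) - (q 2 : ℤ)|} : Multiset ℤ)
    = ({0, 1, 2} : Multiset ℤ)

/-- The label in {1,…,64} that the tour `T` assigns to a cell. -/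
def tourLabel (T : Cell ≃ Fin 64) (c : Cell) : ℕ := (T c : ℕ) + 1

/-- `T` is a knight's tour: consecutive labels occupy cells joined by a knight's move. -/
def IsTour (T : Cell ≃ Fin 64) : Prop :=
  ∀ i : Fin 64, (i : ℕ) < 63 → KnightMove (T.symm i) (T.symm (i + 1))

/-- The tour is closed: the cells labelled 64 and 1 are joined by a knight's move. -/
def IsClosedTour (T : Cell ≃ Fin 64) : Prop :=
  KnightMove (T.symm 63) (T.symm 0)

/-- The tour is magic: every axis-parallel line of 4 cells has labels summing to 130. -/
def IsMagic (T : Cell ≃ Fin 64) : Prop :=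
  ∀ (a : Fin 3) (c : Cell), ∑ v : Fin 4, tourLabel T (Function.update c a v) = 130

/-- The tour is diagonally magic: each of the four space diagonals sums to 130. -/
def IsDiagMagic (T : Cell ≃ Fin 64) : Prop :=
  (∑ i : Fin 4, tourLabel T ![i, i, i] = 130) ∧
  (∑ i : Fin 4, tourLabel T ![i, i, i.rev] = 130) ∧
  (∑ i : Fin 4, tourLabel T ![i, i.rev, i] = 130) ∧
  (∑ i : Fin 4, tourLabel T ![i, i.rev, i.rev] = 130)

/-- The tour as a table indexed by `x`, `y`, `z`: the entry is the label minus one. -/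
def magicLabel : Fin 4 → Fin 4 → Fin 4 → Fin 64 :=
  ![![![6, 29, 42, 49],
      ![41, 50, 5, 30],
      ![58, 33, 22, 13],
      ![21, 14, 57, 34]],
    ![![59, 0, 55, 12],
      ![20, 47, 24, 35],
      ![7, 60, 11, 48],
      ![40, 19, 36, 31]],
    ![![8, 51, 4, 63],
      ![39, 28, 43, 16],
      ![52, 15, 56, 3],
      ![27, 32, 23, 44]],
    ![![53, 46, 25, 2],
      ![26, 1, 54, 45],
      ![9, 18, 37, 62],
      ![38, 61, 10, 17]]]

/-- The cells labelled 1 to 32, in the order in which the tour visits them. -/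
def magicHalfPath : List (Fin 4 × Fin 4 × Fin 4) :=
  [(1, 0, 1), (3, 1, 1), (3, 0, 3), (2, 2, 3), (2, 0, 2), (0, 1, 2), (0, 0, 0), (1, 2, 0),
    (2, 0, 0), (3, 2, 0), (3, 3, 2), (1, 2, 2), (1, 0, 3), (0, 2, 3), (0, 3, 1), (2, 2, 1),
    (2, 1, 3), (3, 3, 3), (3, 2, 1), (1, 3, 1), (1, 1, 0), (0, 3, 0), (0, 2, 2), (2, 3, 2),
    (1, 1, 2), (3, 0, 2), (3, 1, 0), (2, 3, 0), (2, 1, 1), (0, 0, 1), (0, 1, 3), (1, 3, 3)]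

/-- The inverse table: the cell whose label is `i + 1`. The second half of the tour is the image of
the first under the half-turn `(x, y, z) ↦ (3 - x, 3 - y, z)`. The default value of `getD` is never
used, since `i % 32` is a valid index. -/
def magicPath (i : Fin 64) : Cell :=
  let p := magicHalfPath.getD (i % 32) (0, 0, 0)
  if (i : ℕ) < 32 then ![p.1, p.2.1, p.2.2] else ![p.1.rev, p.2.1.rev, p.2.2]

/-- The six-digit criterion behind the magic property: on the given four cells each binary digit
of the label minus one takes the value 1 exactly twice. -/
def DigitBalanced (l : Fin 4 → Fin 64) : Prop :=
  ∀ k : Fin 6, ∑ v, (l v : ℕ) / 2 ^ (k : ℕ) % 2 = 2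

instance (l : Fin 4 → Fin 64) : Decidable (DigitBalanced l) := by
  unfold DigitBalanced
  infer_instance

/-- Summing the binary digits with their weights gives `2 * 63`, and the shift from `{0,…,63}` to
`{1,…,64}` adds 4. -/
theorem DigitBalanced.sum_eq {l : Fin 4 → Fin 64} (h : DigitBalanced l) :
    ∑ v, ((l v : ℕ) + 1) = 130 := by
  have expand : ∀ m : Fin 64, (m : ℕ) =
      ∑ k : Fin 6, 2 ^ (k : ℕ) * ((m : ℕ) / 2 ^ (k : ℕ) % 2) := by
    decide +kernel
  calc ∑ v, ((l v : ℕ) + 1)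
      = (∑ v, ∑ k : Fin 6, 2 ^ (k : ℕ) * ((l v : ℕ) / 2 ^ (k : ℕ) % 2)) + 4 := by
        simp only [Finset.sum_add_distrib, ← expand]
        rfl
    _ = (∑ k : Fin 6, 2 ^ (k : ℕ) * ∑ v, (l v : ℕ) / 2 ^ (k : ℕ) % 2) + 4 := by
        rw [Finset.sum_comm]
        simp only [Finset.mul_sum]
    _ = (∑ k : Fin 6, 2 ^ (k : ℕ) * 2) + 4 := by
        simp only [h _]
    _ = 130 := rfl

/-- The magic tour as a bijection between cells and `{0,…,63}`. -/
def magicTour : Cell ≃ Fin 64 where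
  toFun c := magicLabel (c 0) (c 1) (c 2)
  invFun := magicPath
  left_inv c := by
    have h : ∀ x y z : Fin 4, magicPath (magicLabel x y z) 0 = x ∧
        magicPath (magicLabel x y z) 1 = y ∧ magicPath (magicLabel x y z) 2 = z := by
      decide +kernel
    funext a
    obtain ⟨hx, hy, hz⟩ := h (c 0) (c 1) (c 2)
    fin_cases a
    exacts [hx, hy, hz]
  right_inv := by
    have h : ∀ i : Fin 64, magicLabel (magicPath i 0) (magicPath i 1) (magicPath i 2) = i := by
      decide +kernel
    exact h

instance (p q : Cell) : Decidable (KnightMove p q) := by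
  unfold KnightMove
  infer_instance

/-- In `Fin 64` the successor of 63 is 0, so this covers the closing move as well. -/
theorem magicPath_knightMove : ∀ i : Fin 64, KnightMove (magicPath i) (magicPath (i + 1)) := by
  decide +kernel

theorem magicLabel_lines : ∀ y z : Fin 4,
    DigitBalanced (fun v => magicLabel v y z) ∧ DigitBalanced (fun v => magicLabel y v z) ∧
      DigitBalanced (fun v => magicLabel y z v) := by
  decide +kernel

theorem magicLabel_diagonals :
    DigitBalanced (fun i => magicLabel i i i) ∧ DigitBalanced (fun i => magicLabel i i i.rev) ∧
      DigitBalanced (fun i => magicLabel i i.rev i) ∧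
      DigitBalanced (fun i => magicLabel i i.rev i.rev) := by
  decide +kernel

/-- There exists a closed, diagonally magic knight's tour of the 4×4×4 cube. -/
theorem exists_closed_diagonally_magic_knight_tour :
    ∃ T : Cell ≃ Fin 64, IsTour T ∧ IsClosedTour T ∧ IsMagic T ∧ IsDiagMagic T := by
  refine ⟨magicTour, fun i _ => magicPath_knightMove i, magicPath_knightMove 63, ?_, ?_⟩
  · intro a c
    fin_cases a
    · exact (magicLabel_lines (c 1) (c 2)).1.sum_eq
    · exact (magicLabel_lines (c 0) (c 2)).2.1.sum_eq
    · exact (magicLabel_lines (c 0) (c 1)).2.2.sum_eq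
  · obtain ⟨h₁, h₂, h₃, h₄⟩ := magicLabel_diagonals
    exact ⟨h₁.sum_eq, h₂.sum_eq, h₃.sum_eq, h₄.sum_eq⟩
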